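/- arXiv:1704.08191 — 2 statements merged into one kernel-verified Lean document; each statement's English description precedes it below -/
import Mathlib

section
/- For all real numbers α > 0, β > 0 and every natural number n, the function m ↦ B(α, β; m) is n times differentiable on ℝ and its n-th derivative satisfies (d^n/dm^n) B(α, β; m) = B(α + n, β + n; m) for every real m. -/
/-!
Differentiating the integrand once in `m` brings down a factor `t * (1 - t)`, which raises both
exponents by one. For `m` in a bounded set the differentiated integrand is dominated by a constant
multiple of the integrable beta weight `t ^ (α - 1) * (1 - t) ^ (β - 1)`, so differentiation under
the integral sign gives `∂B(α, β; m)/∂m = B(α + 1, β + 1; m)` (`mecbf_hasDerivAt`). The formula for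
the `n`-th derivative follows by induction, and the smoothness is read off from the fact that every
iterated derivative is again a differentiable function of this form.
-/

open MeasureTheory Real

/-- The modified extension of the classical beta function (MECBF). -/
noncomputable def mecbf (α β m : ℝ) : ℝ :=
  ∫ t in (0:ℝ)..1, t ^ (α - 1) * (1 - t) ^ (β - 1) * Real.exp (m * t * (1 - t))

/-- The real beta weight is integrable: it is the norm of Mathlib's complex beta integrand. -/
lemma beta_weight_intervalIntegrable {α β : ℝ} (hα : 0 < α) (hβ : 0 < β) :
    IntervalIntegrable (fun t : ℝ => t ^ (α - 1) * (1 - t) ^ (β - 1)) volume 0 1 := by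
  have h := (Complex.betaIntegral_convergent (u := α) (v := β) (by simpa) (by simpa)).norm
  refine h.congr fun t ht => ?_
  rw [Set.uIoc_of_le zero_le_one] at ht
  have h0 : 0 ≤ t := ht.1.le
  have h1 : 0 ≤ 1 - t := sub_nonneg.2 ht.2
  have e : (t : ℂ) ^ ((α : ℂ) - 1) * (1 - (t : ℂ)) ^ ((β : ℂ) - 1)
      = ((t ^ (α - 1) * (1 - t) ^ (β - 1) : ℝ) : ℂ) := by
    rw [Complex.ofReal_mul, Complex.ofReal_cpow h0, Complex.ofReal_cpow h1]
    push_cast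
    rfl
  simp only [e]
  rw [Complex.norm_real, Real.norm_of_nonneg (by positivity)]

lemma mecbf_hasDerivAt {α β : ℝ} (hα : 0 < α) (hβ : 0 < β) (m : ℝ) :
    HasDerivAt (fun m : ℝ => mecbf α β m) (mecbf (α + 1) (β + 1) m) m := by
  have hw := beta_weight_intervalIntegrable hα hβ
  have key := (intervalIntegral.hasDerivAt_integral_of_dominated_loc_of_deriv_le
    (μ := volume) (a := 0) (b := 1) (x₀ := m) (s := Metric.ball m 1)
    (F := fun m t => t ^ (α - 1) * (1 - t) ^ (β - 1) * Real.exp (m * t * (1 - t)))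
    (F' := fun m t => t ^ (α - 1) * (1 - t) ^ (β - 1) *
      (Real.exp (m * t * (1 - t)) * (t * (1 - t))))
    (bound := fun t => t ^ (α - 1) * (1 - t) ^ (β - 1) * Real.exp (|m| + 1))
    (Metric.ball_mem_nhds m one_pos)
    (Filter.Eventually.of_forall fun x => Measurable.aestronglyMeasurable (by fun_prop))
    (hw.mul_continuousOn (by fun_prop))
    (Measurable.aestronglyMeasurable (by fun_prop))
    (Filter.Eventually.of_forall ?_)
    (hw.mul_const _)
    (Filter.Eventually.of_forall ?_)).2
  · refine HasDerivAt.congr_deriv key ?_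
    unfold mecbf
    refine intervalIntegral.integral_congr fun t ht => ?_
    rw [Set.uIcc_of_le zero_le_one] at ht
    -- The exponents `α`, `β` are nonzero, so this holds at the endpoints `t = 0, 1` as well.
    have e1 : t ^ (α + 1 - 1) = t ^ (α - 1) * t := by
      rw [← Real.rpow_add_one' ht.1 (by simpa using hα.ne')]
      ring_nf
    have e2 : (1 - t) ^ (β + 1 - 1) = (1 - t) ^ (β - 1) * (1 - t) := by
      rw [← Real.rpow_add_one' (sub_nonneg.2 ht.2) (by simpa using hβ.ne')]
      ring_nf
    simp only [e1, e2]
    ring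
  · intro t ht x hx
    rw [Set.uIoc_of_le zero_le_one] at ht
    have h0 : 0 ≤ t := ht.1.le
    have h1 : 0 ≤ 1 - t := sub_nonneg.2 ht.2
    have hq0 : 0 ≤ t * (1 - t) := mul_nonneg h0 h1
    have hq1 : t * (1 - t) ≤ 1 := by nlinarith
    have hxm : |x| ≤ |m| + 1 := by
      have hd : |x - m| < 1 := by simpa [Real.dist_eq] using hx
      have ht := abs_sub_abs_le_abs_sub x m
      linarith
    rw [Real.norm_of_nonneg (by positivity)]
    refine mul_le_mul_of_nonneg_left ?_ (by positivity)
    calc Real.exp (x * t * (1 - t)) * (t * (1 - t))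
        ≤ Real.exp (x * t * (1 - t)) := mul_le_of_le_one_right (Real.exp_pos _).le hq1
      _ ≤ Real.exp (|m| + 1) := by
        refine Real.exp_le_exp.2 ?_
        calc x * t * (1 - t) = x * (t * (1 - t)) := by ring
          _ ≤ |x| * (t * (1 - t)) := mul_le_mul_of_nonneg_right (le_abs_self x) hq0
          _ ≤ |x| := mul_le_of_le_one_right (abs_nonneg x) hq1
          _ ≤ |m| + 1 := hxm
  · intro t _ x _
    have h : HasDerivAt (fun x : ℝ => x * t * (1 - t)) (t * (1 - t)) x := by
      simpa using ((hasDerivAt_id x).mul_const t).mul_const (1 - t)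
    exact h.exp.const_mul _

lemma mecbf_iteratedDeriv_eq {α β : ℝ} (hα : 0 < α) (hβ : 0 < β) (n : ℕ) :
    iteratedDeriv n (fun m : ℝ => mecbf α β m) = fun m : ℝ => mecbf (α + n) (β + n) m := by
  induction n with
  | zero => simp
  | succ k ih =>
    rw [iteratedDeriv_succ, ih]
    funext m
    rw [(mecbf_hasDerivAt (by positivity) (by positivity) m).deriv]
    push_cast
    simp only [add_assoc]

theorem mecbf_iteratedDeriv (α β : ℝ) (hα : 0 < α) (hβ : 0 < β) (n : ℕ) :
    ContDiff ℝ n (fun m : ℝ => mecbf α β m) ∧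
      ∀ m : ℝ, iteratedDeriv n (fun m : ℝ => mecbf α β m) m = mecbf (α + n) (β + n) m := by
  have hd : ∀ k : ℕ, Differentiable ℝ (iteratedDeriv k (fun m : ℝ => mecbf α β m)) := by
    intro k m
    rw [mecbf_iteratedDeriv_eq hα hβ]
    exact (mecbf_hasDerivAt (by positivity) (by positivity) m).differentiableAt
  exact ⟨contDiff_nat_iff_iteratedDeriv.2 ⟨fun k _ => (hd k).continuous, fun k _ => hd k⟩,
    fun m => congrFun (mecbf_iteratedDeriv_eq hα hβ n) m⟩
end

section
/- For all real numbers α > 0, β > 0 and every real number m, the modified extension of the classical beta function has the symmetric integral representation B(α, β; m) = (1/2) · ∫₀^∞ (u^(α-1) + u^(β-1)) / (1+u)^(α+β) · exp(m·u / (1+u)²) du. -/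
/-!
The substitution `t = u / (1 + u)` maps `(0, ∞)` onto `(0, 1)`, with `1 - t = 1 / (1 + u)` and
`dt = du / (1 + u) ^ 2`, and turns the defining integral into
`∫ u in (0, ∞), u ^ (α - 1) / (1 + u) ^ (α + β) * exp (m * u / (1 + u) ^ 2)`
(`mecbf_eq_integral_Ioi`). The reflection `t ↦ 1 - t` gives `B(α, β; m) = B(β, α; m)`
(`mecbf_comm`), so the stated formula is the average of the two resulting representations.
Splitting the integral of the sum requires both pieces to be integrable, which is
inherited from the classical beta integral since the exponential factor is bounded on `[0, 1]`.
-/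

open MeasureTheory Real

/-- The integrand on `(0, ∞)` obtained from that of `mecbf` by `t = u / (1 + u)`. -/
noncomputable def mecbfKernel (α β m u : ℝ) : ℝ :=
  u ^ (α - 1) / (1 + u) ^ (α + β) * Real.exp (m * u / (1 + u) ^ 2)

lemma image_div_one_add_Ioi :
    (fun u : ℝ => u / (1 + u)) '' Set.Ioi 0 = Set.Ioo 0 1 := by
  ext t
  constructor
  · rintro ⟨u, hu, rfl⟩
    have hu' : (0 : ℝ) < u := hu
    exact ⟨by positivity, by rw [div_lt_one (by positivity)]; linarith⟩
  · rintro ⟨h0, h1⟩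
    have h : 0 < 1 - t := by linarith
    refine ⟨t / (1 - t), div_pos h0 h, ?_⟩
    have h2 : 1 + t / (1 - t) = 1 / (1 - t) := by field_simp; ring
    simp only [h2]
    field_simp

lemma injOn_div_one_add : Set.InjOn (fun u : ℝ => u / (1 + u)) (Set.Ioi 0) := by
  intro u hu v hv h
  have hu' : (0 : ℝ) < u := hu
  have hv' : (0 : ℝ) < v := hv
  simp only at h
  rw [div_eq_div_iff (by positivity) (by positivity)] at h
  linarith

lemma hasDerivWithinAt_div_one_add (u : ℝ) (hu : u ∈ Set.Ioi (0 : ℝ)) :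
    HasDerivWithinAt (fun u : ℝ => u / (1 + u)) (1 / (1 + u) ^ 2) (Set.Ioi 0) u := by
  have hu' : (0 : ℝ) < u := hu
  have h := (hasDerivAt_id u).div ((hasDerivAt_id u).const_add 1)
    (show 1 + id u ≠ 0 by simp only [id]; positivity)
  refine (h.congr_deriv ?_).hasDerivWithinAt
  simp

lemma jacobian_smul_integrand (α β m u : ℝ) (hu : u ∈ Set.Ioi (0 : ℝ)) :
    |1 / (1 + u) ^ 2| • ((u / (1 + u)) ^ (α - 1) * (1 - u / (1 + u)) ^ (β - 1) *
      Real.exp (m * (u / (1 + u)) * (1 - u / (1 + u)))) = mecbfKernel α β m u := by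
  have hu' : (0 : ℝ) < u := hu
  have h1 : 0 < 1 + u := by positivity
  have h2 : 1 - u / (1 + u) = (1 + u)⁻¹ := by field_simp; ring
  have h3 : m * (u / (1 + u)) * (1 + u)⁻¹ = m * u / (1 + u) ^ 2 := by field_simp
  have h4 : (1 + u) ^ (α + β) = (1 + u) ^ (α - 1) * (1 + u) ^ (β - 1) * (1 + u) ^ 2 := by
    rw [← Real.rpow_natCast, ← Real.rpow_add h1, ← Real.rpow_add h1]
    congr 1
    push_cast
    ring
  rw [h2, h3, abs_of_pos (by positivity), Real.div_rpow hu'.le h1.le, Real.inv_rpow h1.le,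
    mecbfKernel, h4, smul_eq_mul]
  have := Real.rpow_pos_of_pos h1 (α - 1)
  have := Real.rpow_pos_of_pos h1 (β - 1)
  field_simp

lemma mecbf_eq_integral_Ioi (α β m : ℝ) :
    mecbf α β m = ∫ u in Set.Ioi (0 : ℝ), mecbfKernel α β m u := by
  rw [mecbf, intervalIntegral.integral_of_le zero_le_one, integral_Ioc_eq_integral_Ioo,
    ← image_div_one_add_Ioi, integral_image_eq_integral_abs_deriv_smul measurableSet_Ioi
      hasDerivWithinAt_div_one_add injOn_div_one_add]
  exact setIntegral_congr_fun measurableSet_Ioi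
    fun u hu => jacobian_smul_integrand α β m u hu

lemma mecbf_comm (α β m : ℝ) : mecbf α β m = mecbf β α m := by
  have h := intervalIntegral.integral_comp_sub_left (a := 0) (b := 1)
    (fun t : ℝ => t ^ (α - 1) * (1 - t) ^ (β - 1) * Real.exp (m * t * (1 - t))) 1
  simp only [sub_self, sub_zero] at h
  rw [mecbf, mecbf, ← h]
  refine intervalIntegral.integral_congr fun t _ => ?_
  simp only [sub_sub_cancel]
  rw [mul_comm (t ^ (β - 1)), mul_right_comm m t]

lemma integrableOn_mecbf_integrand (α β m : ℝ) (hα : 0 < α) (hβ : 0 < β) :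
    IntegrableOn (fun t : ℝ => t ^ (α - 1) * (1 - t) ^ (β - 1) * Real.exp (m * t * (1 - t)))
      (Set.Ioo 0 1) := by
  have hc := (Complex.betaIntegral_convergent (u := α) (v := β) (by simpa) (by simpa)).norm
  have hr : IntervalIntegrable (fun t : ℝ => t ^ (α - 1) * (1 - t) ^ (β - 1)) volume 0 1 := by
    rw [intervalIntegrable_iff_integrableOn_Ioo_of_le zero_le_one] at hc ⊢
    refine hc.congr_fun (fun t ht => ?_) measurableSet_Ioo
    have h1 : 0 < 1 - t := sub_pos.2 ht.2
    simp only [norm_mul]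
    rw [Complex.norm_cpow_eq_rpow_re_of_pos ht.1,
      show (1 : ℂ) - (t : ℂ) = ((1 - t : ℝ) : ℂ) by push_cast; rfl,
      Complex.norm_cpow_eq_rpow_re_of_pos h1]
    simp
  have h := hr.mul_continuousOn (g := fun t : ℝ => Real.exp (m * t * (1 - t)))
    (by fun_prop)
  exact (intervalIntegrable_iff_integrableOn_Ioo_of_le zero_le_one).1 h

lemma integrableOn_mecbfKernel (α β m : ℝ) (hα : 0 < α) (hβ : 0 < β) :
    IntegrableOn (mecbfKernel α β m) (Set.Ioi 0) := by
  have h := integrableOn_mecbf_integrand α β m hα hβ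
  rw [← image_div_one_add_Ioi, integrableOn_image_iff_integrableOn_abs_deriv_smul
    measurableSet_Ioi hasDerivWithinAt_div_one_add injOn_div_one_add] at h
  exact h.congr_fun (fun u hu => jacobian_smul_integrand α β m u hu) measurableSet_Ioi

theorem mecbf_symmetric_repr (α β m : ℝ) (hα : 0 < α) (hβ : 0 < β) :
    mecbf α β m =
      (1 / 2) * ∫ u in Set.Ioi (0 : ℝ),
        (u ^ (α - 1) + u ^ (β - 1)) / (1 + u) ^ (α + β) *
          Real.exp (m * u / (1 + u) ^ 2) := by
  have hsplit : ∀ u : ℝ, (u ^ (α - 1) + u ^ (β - 1)) / (1 + u) ^ (α + β) *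
      Real.exp (m * u / (1 + u) ^ 2) = mecbfKernel α β m u + mecbfKernel β α m u := by
    intro u
    rw [mecbfKernel, mecbfKernel, add_comm β α]
    ring
  simp only [hsplit]
  rw [integral_add (integrableOn_mecbfKernel α β m hα hβ)
    (integrableOn_mecbfKernel β α m hβ hα), ← mecbf_eq_integral_Ioi, ← mecbf_eq_integral_Ioi,
    mecbf_comm β α]
  ring
end
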